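/- Let K be a field, let n ≥ 2, and let I be the ideal of the polynomial ring K[X_0, X_1, …, X_n] generated by the polynomials F_{i,j} = X_{i-1}·X_{j+1} − X_i·X_j for all 1 ≤ i ≤ j ≤ n−1. Then the quotient algebra K[X_0, X_1, …, X_n]/I is isomorphic, as a K-algebra, to the subalgebra K[x^n, x^{n−1}y, …, x y^{n−1}, y^n] of the polynomial ring K[x,y], via the map induced by X_i ↦ x^{n−i} y^i for 0 ≤ i ≤ n. -/

import Mathlib

open MvPolynomial

/-!
The map `Xᵢ ↦ xⁿ⁻ⁱyⁱ` sends monomials to monomials, so its kernel is spanned by the differences of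
monomials with the same image, that is, with the same degree and the same sum of indices.

The generators of `I` say that `XᵢXⱼ` depends modulo `I` only on `i + j`. Multiplying in one
variable at a time, any nonconstant monomial becomes `X₀ᵃXᵣXₙᵇ` modulo `I`. Its degree `a + b + 1`
and index sum `r + nb` determine this normal form, so monomials with equal images agree modulo `I`.
-/

section MonomialMaps

variable {σ τ R A : Type*} [CommSemiring R] [CommSemiring A] [Algebra R A]

lemma aeval_monomial_one_eq_prod_toMultiset (x : σ → A) (s : σ →₀ ℕ) :
    aeval x (monomial s (1 : R)) = (s.toMultiset.map x).prod := by
  rw [aeval_monomial, map_one, one_mul, Finsupp.toMultiset_map, Finsupp.prod_toMultiset,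
    Finsupp.prod_mapDomain_index (fun _ ↦ pow_zero _) fun _ ↦ pow_add _]

lemma prod_map_monomial_one (v : σ → τ →₀ ℕ) (s : Multiset σ) :
    (s.map fun i ↦ monomial (v i) (1 : R)).prod = monomial (s.map v).sum 1 := by
  induction s using Multiset.induction_on with
  | empty => simp
  | cons i s ih => simp [ih, monomial_mul]

theorem ker_aeval_monomial_le_ker_aeval (v : σ → τ →₀ ℕ) (x : σ → A)
    (h : ∀ s t : Multiset σ, (s.map v).sum = (t.map v).sum → (s.map x).prod = (t.map x).prod) :
    RingHom.ker (aeval fun i ↦ monomial (v i) (1 : R)) ≤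
      RingHom.ker (aeval x : MvPolynomial σ R →ₐ[R] A) := by
  let exponent (s : σ →₀ ℕ) : τ →₀ ℕ := (s.toMultiset.map v).sum
  let value (s : σ →₀ ℕ) : A := (s.toMultiset.map x).prod
  have value_factors : value.FactorsThrough exponent := fun s t hst ↦ h _ _ hst
  let ψ : MvPolynomial τ R →ₗ[R] A :=
    (basisMonomials τ R).constr R (Function.extend exponent value 0)
  have hψ : ψ ∘ₗ (aeval fun i ↦ monomial (v i) (1 : R)).toLinearMap =
      (aeval x : MvPolynomial σ R →ₐ[R] A).toLinearMap := by
    refine (basisMonomials σ R).ext fun s ↦ ?_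
    calc ψ (aeval (fun i ↦ monomial (v i) (1 : R)) (basisMonomials σ R s))
        = ψ (basisMonomials τ R (exponent s)) := by
          rw [coe_basisMonomials, coe_basisMonomials, aeval_monomial_one_eq_prod_toMultiset,
            prod_map_monomial_one]
      _ = value s := by rw [Module.Basis.constr_basis, value_factors.extend_apply]
      _ = aeval x (basisMonomials σ R s) := by
          rw [coe_basisMonomials, aeval_monomial_one_eq_prod_toMultiset]
  intro p hp
  rw [RingHom.mem_ker] at hp ⊢
  have hpx := LinearMap.congr_fun hψ p
  rwa [LinearMap.comp_apply, AlgHom.toLinearMap_apply, hp, map_zero, eq_comm] at hpx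

end MonomialMaps

section HankelMinors

variable {M : Type*} [CommMonoid M] {n : ℕ}

/-- The `2 × 2` minors of the matrix with rows `x₀, …, xₙ₋₁` and `x₁, …, xₙ` vanish. The condition
is stated without subtraction, so that it makes sense in a commutative monoid. The relation
`F_{i+1,j}` of the paper is the minor on columns `i < j`. -/
def HankelMinorsVanish (x : Fin (n + 1) → M) : Prop :=
  ∀ ⦃i j : Fin n⦄, i < j → x i.castSucc * x j.succ = x i.succ * x j.castSucc

lemma hankelMinorsVanish_pow_mul_pow (u v : M) :
    HankelMinorsVanish fun i : Fin (n + 1) ↦ u ^ (n - (i : ℕ)) * v ^ (i : ℕ) := by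
  intro i j _
  have sub_eq (k : Fin n) : n - (k : ℕ) = n - (k + 1) + 1 := by omega
  simp only [Fin.val_castSucc, Fin.val_succ, sub_eq i, sub_eq j, pow_succ]
  ac_rfl

lemma pow_mul_mul_pow_eq_of_add_eq (hn : n ≠ 0) (x : Fin (n + 1) → M) {a b a' b' : ℕ}
    {r r' : Fin (n + 1)} (hdeg : a + b = a' + b') (hsum : r + n * b = r' + n * b') :
    x 0 ^ a * x r * x (Fin.last n) ^ b = x 0 ^ a' * x r' * x (Fin.last n) ^ b' := by
  wlog hb : b ≤ b' generalizing a b a' b' r r'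
  · exact (this hdeg.symm hsum.symm (by omega)).symm
  obtain ⟨d, rfl⟩ := Nat.exists_eq_add_of_le hb
  obtain rfl : a = a' + d := by omega
  have hr : (r : ℕ) = r' + n * d := by rw [mul_add] at hsum; omega
  obtain rfl | rfl | hd : d = 0 ∨ d = 1 ∨ 2 ≤ d := by omega
  · obtain rfl : r = r' := Fin.ext (by simpa using hr)
    rfl
  · obtain rfl : r = Fin.last n := Fin.ext (by rw [Fin.val_last]; omega)
    obtain rfl : r' = 0 := Fin.ext (by rw [Fin.val_zero]; omega)
    rw [pow_succ, pow_succ']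
    ac_rfl
  · have : n * 2 ≤ n * d := Nat.mul_le_mul_left n hd
    omega

namespace HankelMinorsVanish

variable {x : Fin (n + 1) → M}

lemma castSucc_mul_succ (hx : HankelMinorsVanish x) (i j : Fin n) :
    x i.castSucc * x j.succ = x i.succ * x j.castSucc := by
  obtain hij | rfl | hij := lt_trichotomy i j
  · exact hx hij
  · exact mul_comm _ _
  · rw [mul_comm, ← hx hij, mul_comm]

lemma mul_eq_mul_of_val_add_eq (hx : HankelMinorsVanish x) {a b c d : Fin (n + 1)}
    (h : (a : ℕ) + b = c + d) : x a * x b = x c * x d := by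
  wlog hac : a ≤ c generalizing a b c d
  · exact (this h.symm (le_of_not_ge hac)).symm
  obtain ⟨k, hk⟩ := Nat.exists_eq_add_of_le hac
  induction k generalizing a b with
  | zero =>
    obtain rfl : a = c := Fin.ext (by omega)
    obtain rfl : b = d := Fin.ext (by omega)
    rfl
  | succ k ih =>
    obtain ⟨i, rfl⟩ := Fin.exists_castSucc_eq.2 (show a ≠ Fin.last n by grind)
    obtain ⟨j, rfl⟩ := Fin.exists_succ_eq.2 (show b ≠ 0 by grind)
    rw [hx.castSucc_mul_succ]
    exact ih (by grind) (by grind) (by grind)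

lemma exists_prod_map_cons_eq (hx : HankelMinorsVanish x) (i : Fin (n + 1))
    (s : Multiset (Fin (n + 1))) :
    ∃ (a b : ℕ) (r : Fin (n + 1)), s.card = a + b ∧
      ((i ::ₘ s).map Fin.val).sum = r + n * b ∧
      ((i ::ₘ s).map x).prod = x 0 ^ a * x r * x (Fin.last n) ^ b := by
  induction s using Multiset.induction_on with
  | empty => exact ⟨0, 0, i, by simp⟩
  | cons j s ih =>
    obtain ⟨a, b, r, hcard, hsum, hprod⟩ := ih
    rw [Multiset.cons_swap, Multiset.map_cons Fin.val j, Multiset.map_cons x j, Multiset.sum_cons,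
      Multiset.prod_cons, hsum, hprod, Multiset.card_cons, hcard]
    have swap : x j * (x 0 ^ a * x r * x (Fin.last n) ^ b) =
        x 0 ^ a * (x j * x r) * x (Fin.last n) ^ b := by ac_rfl
    obtain hjr | hjr := le_total ((j : ℕ) + r) n
    · let q : Fin (n + 1) := ⟨j + r, by omega⟩
      have hmul : x j * x r = x 0 * x q := hx.mul_eq_mul_of_val_add_eq (by simp [q])
      refine ⟨a + 1, b, q, by omega, by simp only [q]; omega, ?_⟩
      rw [swap, hmul, ← mul_assoc, pow_succ]
    · let q : Fin (n + 1) := ⟨j + r - n, by omega⟩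
      have hmul : x j * x r = x q * x (Fin.last n) := hx.mul_eq_mul_of_val_add_eq (by grind)
      refine ⟨a, b + 1, q, by omega, by simp only [q, mul_add]; omega, ?_⟩
      rw [swap, hmul, ← mul_assoc, mul_assoc _ (x _), pow_succ']

theorem prod_map_eq_prod_map (hx : HankelMinorsVanish x) (hn : n ≠ 0)
    {s t : Multiset (Fin (n + 1))} (hcard : s.card = t.card)
    (hsum : (s.map Fin.val).sum = (t.map Fin.val).sum) :
    (s.map x).prod = (t.map x).prod := by
  cases hk : s.card with
  | zero => rw [Multiset.card_eq_zero.1 hk, Multiset.card_eq_zero.1 (hcard.symm.trans hk)]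
  | succ k =>
    obtain ⟨i, s, rfl, hs⟩ := Multiset.card_eq_succ_iff.1 hk
    obtain ⟨j, t, rfl, ht⟩ := Multiset.card_eq_succ_iff.1 (hcard.symm.trans hk)
    obtain ⟨a, b, r, hab, hr, hprod⟩ := hx.exists_prod_map_cons_eq i s
    obtain ⟨a', b', r', hab', hr', hprod'⟩ := hx.exists_prod_map_cons_eq j t
    rw [hprod, hprod']
    exact pow_mul_mul_pow_eq_of_add_eq hn x (by omega) (by omega)

end HankelMinorsVanish

end HankelMinors

section VeroneseMap

variable (R : Type*) [CommSemiring R] (n : ℕ)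

/-- The parametrization `Xᵢ ↦ xⁿ⁻ⁱyⁱ` of the cone over the rational normal curve of degree `n`. -/
noncomputable def veroneseMap : MvPolynomial (Fin (n + 1)) R →ₐ[R] MvPolynomial (Fin 2) R :=
  aeval fun i ↦ X 0 ^ (n - (i : ℕ)) * X 1 ^ (i : ℕ)

lemma range_veroneseMap : (veroneseMap R n).range =
    Algebra.adjoin R {m : MvPolynomial (Fin 2) R | ∃ i ≤ n, m = X 0 ^ (n - i) * X 1 ^ i} := by
  rw [veroneseMap, ← Algebra.adjoin_range_eq_range_aeval]
  congr 1
  ext m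
  simp only [Set.mem_range, Set.mem_ofPred_eq, Fin.exists_iff, Nat.lt_succ_iff, exists_prop,
    eq_comm (a := m)]

/-- The exponent vector of `xⁿ⁻ⁱyⁱ`. -/
noncomputable def veroneseExponent (i : Fin (n + 1)) : Fin 2 →₀ ℕ :=
  Finsupp.single 0 (n - (i : ℕ)) + Finsupp.single 1 (i : ℕ)

lemma veroneseMap_eq_aeval_monomial :
    veroneseMap R n = aeval fun i ↦ monomial (veroneseExponent n i) 1 := by
  simp only [veroneseMap, veroneseExponent, X_pow_eq_monomial, monomial_mul, one_mul]

variable {n}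

lemma sum_map_veroneseExponent_one (s : Multiset (Fin (n + 1))) :
    (s.map (veroneseExponent n)).sum 1 = (s.map Fin.val).sum := by
  induction s using Multiset.induction_on with
  | empty => simp
  | cons i s ih => simp [ih, veroneseExponent]

lemma degree_sum_map_veroneseExponent (s : Multiset (Fin (n + 1))) :
    (s.map (veroneseExponent n)).sum.degree = n * s.card := by
  induction s using Multiset.induction_on with
  | empty => simp
  | cons i s ih =>
    have degree_eq : (veroneseExponent n i).degree = n := by
      rw [veroneseExponent, map_add, Finsupp.degree_single, Finsupp.degree_single]
      omega
    simp [ih, degree_eq, mul_add, add_comm]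

end VeroneseMap

section VeroneseIdeal

variable (R : Type*) [CommRing R] (n : ℕ)

/-- The ideal `I` of the paper, as the ideal of `2 × 2` minors of the matrix with rows
`X₀, …, Xₙ₋₁` and `X₁, …, Xₙ`. -/
noncomputable def veroneseIdeal : Ideal (MvPolynomial (Fin (n + 1)) R) :=
  Ideal.span {f | ∃ i j : Fin n, i < j ∧
    f = X i.castSucc * X j.succ - X i.succ * X j.castSucc}

lemma hankelMinorsVanish_mk_X :
    HankelMinorsVanish fun i ↦ Ideal.Quotient.mk (veroneseIdeal R n) (X i) := by
  intro i j hij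
  simp only [← map_mul]
  exact Ideal.Quotient.eq.2 (Ideal.subset_span ⟨i, j, hij, rfl⟩)

lemma veroneseIdeal_le_ker : veroneseIdeal R n ≤ RingHom.ker (veroneseMap R n) := by
  rw [veroneseIdeal, Ideal.span_le]
  rintro _ ⟨i, j, hij, rfl⟩
  simp only [SetLike.mem_coe, RingHom.mem_ker, map_sub, map_mul, veroneseMap, aeval_X]
  exact sub_eq_zero.2 (hankelMinorsVanish_pow_mul_pow _ _ hij)

lemma span_eq_veroneseIdeal :
    Ideal.span {f : MvPolynomial (Fin (n + 1)) R |
      ∃ (i j : ℕ) (_ : 1 ≤ i) (_ : i ≤ j) (_ : j ≤ n - 1),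
        f = X (⟨i - 1, by omega⟩ : Fin (n + 1)) * X ⟨j + 1, by omega⟩
          - X ⟨i, by omega⟩ * X ⟨j, by omega⟩} = veroneseIdeal R n := by
  rw [veroneseIdeal]
  congr 1
  ext f
  constructor
  · rintro ⟨i, j, hi, hij, hj, rfl⟩
    obtain ⟨i, rfl⟩ := Nat.exists_eq_add_of_le' hi
    exact ⟨⟨i, by omega⟩, ⟨j, by omega⟩, hij, rfl⟩
  · rintro ⟨i, j, hij, rfl⟩
    exact ⟨i + 1, j, by omega, hij, by omega, rfl⟩

variable {n}

theorem ker_veroneseMap (hn : n ≠ 0) : RingHom.ker (veroneseMap R n) = veroneseIdeal R n := by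
  refine le_antisymm ?_ (veroneseIdeal_le_ker R n)
  have mk_eq_aeval : Ideal.Quotient.mkₐ R (veroneseIdeal R n) =
      aeval fun i ↦ Ideal.Quotient.mk (veroneseIdeal R n) (X i) :=
    aeval_unique _
  rw [veroneseMap_eq_aeval_monomial, ← Ideal.Quotient.mkₐ_ker R (veroneseIdeal R n), mk_eq_aeval]
  refine ker_aeval_monomial_le_ker_aeval _ _ fun s t hst ↦ ?_
  refine (hankelMinorsVanish_mk_X R n).prod_map_eq_prod_map hn ?_ ?_
  · have hdeg := congrArg Finsupp.degree hst
    rw [degree_sum_map_veroneseExponent, degree_sum_map_veroneseExponent] at hdeg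
    exact Nat.eq_of_mul_eq_mul_left (Nat.pos_of_ne_zero hn) hdeg
  · rw [← sum_map_veroneseExponent_one, hst, sum_map_veroneseExponent_one]

end VeroneseIdeal

theorem veronese_quotient_iso_general (R : Type*) [CommRing R] (n : ℕ) (hn : n ≠ 0)
    (I : Ideal (MvPolynomial (Fin (n + 1)) R))
    (hI : I = Ideal.span {f : MvPolynomial (Fin (n + 1)) R |
      ∃ (i j : ℕ) (_ : 1 ≤ i) (_ : i ≤ j) (_ : j ≤ n - 1),
        f = X (⟨i - 1, by omega⟩ : Fin (n + 1)) * X ⟨j + 1, by omega⟩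
          - X ⟨i, by omega⟩ * X ⟨j, by omega⟩}) :
    ∃ e : (MvPolynomial (Fin (n + 1)) R ⧸ I) ≃ₐ[R]
        (Algebra.adjoin R {m : MvPolynomial (Fin 2) R | ∃ i ≤ n, m = X 0 ^ (n - i) * X 1 ^ i}),
      ∀ i : Fin (n + 1),
        (e (Ideal.Quotient.mk I (X i)) : MvPolynomial (Fin 2) R)
          = X 0 ^ (n - (i : ℕ)) * X 1 ^ (i : ℕ) := by
  have hker : I = RingHom.ker (veroneseMap R n) := by
    rw [hI, span_eq_veroneseIdeal, ker_veroneseMap R hn]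
  refine ⟨(Ideal.quotientEquivAlgOfEq R hker).trans <|
    (Ideal.quotientKerEquivRange (veroneseMap R n)).trans <|
    Subalgebra.equivOfEq _ _ (range_veroneseMap R n), fun i ↦ ?_⟩
  change veroneseMap R n (X i) = _
  rw [veroneseMap, aeval_X]

/-- `K[X₀,…,Xₙ]/I ≅ K[xⁿ, xⁿ⁻¹y, …, xyⁿ⁻¹, yⁿ]` via `Xᵢ ↦ xⁿ⁻ⁱyⁱ`,
where `I` is generated by the `F_{i,j} = X_{i-1} X_{j+1} - X_i X_j`, `1 ≤ i ≤ j ≤ n-1`. -/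
theorem veronese_quotient_iso (K : Type*) [Field K] (n : ℕ) (hn : 2 ≤ n)
    (I : Ideal (MvPolynomial (Fin (n + 1)) K))
    (hI : I = Ideal.span {f : MvPolynomial (Fin (n + 1)) K |
      ∃ (i j : ℕ) (_ : 1 ≤ i) (_ : i ≤ j) (_ : j ≤ n - 1),
        f = X (⟨i - 1, by omega⟩ : Fin (n + 1)) * X ⟨j + 1, by omega⟩
          - X ⟨i, by omega⟩ * X ⟨j, by omega⟩}) :
    ∃ e : (MvPolynomial (Fin (n + 1)) K ⧸ I) ≃ₐ[K]
        (Algebra.adjoin K {m : MvPolynomial (Fin 2) K | ∃ i ≤ n, m = X 0 ^ (n - i) * X 1 ^ i}),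
      ∀ i : Fin (n + 1),
        (e (Ideal.Quotient.mk I (X i)) : MvPolynomial (Fin 2) K)
          = X 0 ^ (n - (i : ℕ)) * X 1 ^ (i : ℕ) :=
  veronese_quotient_iso_general K n (by omega) I hI
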